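/- Let $n \geq 3$ and $W \in L^{n/2,1}(\mathbb{R}^n)$. For all $x, y \in \mathbb{R}^n$ with $x \neq y$ it holds that $\int_{\mathbb{R}^n} \frac{1}{|x-z|^{n-2}}\,|W(z)|\,\frac{1}{|z-y|^{n-2}}\,dz \leq \|a\|_{\frac{n}{n-2},\infty}\,\|W\|_{n/2,1}\,\frac{2^{n-1}}{|x-y|^{n-2}}$, where $a(x) = |x|^{-(n-2)}$. -/

import Mathlib

open MeasureTheory ENNReal Filter
open scoped ENNReal NNReal

noncomputable section

/-- Euclidean space `ℝⁿ`. -/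
abbrev Rn (n : ℕ) : Type := EuclideanSpace ℝ (Fin n)

/-- The distribution function `d_f(t) = |{x : |f x| > t}|` (Lebesgue measure). -/
def distFun {n : ℕ} (f : Rn n → ℂ) (t : ℝ) : ℝ≥0∞ :=
  volume {x : Rn n | t < ‖f x‖}

/-- The Lorentz quasinorm `‖f‖_{p,q}` (valued in `ℝ≥0∞`).  For `q < ∞` it is
`p^{1/q} (∫_0^∞ t^{q-1} d_f(t)^{q/p} dt)^{1/q}`; for `q = ∞`, `p < ∞` it is
`sup_{t>0} t · d_f(t)^{1/p}`; for `p = q = ∞` it is the essential supremum (`L^∞`). -/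
def lorentzNorm {n : ℕ} (f : Rn n → ℂ) (p q : ℝ≥0∞) : ℝ≥0∞ :=
  if q = ∞ then
    if p = ∞ then essSup (fun x => (‖f x‖₊ : ℝ≥0∞)) volume
    else ⨆ (t : ℝ) (_ : 0 < t), ENNReal.ofReal t * distFun f t ^ (1 / p.toReal)
  else
    p ^ (1 / q.toReal) *
      (∫⁻ t in Set.Ioi (0 : ℝ),
        ENNReal.ofReal (t ^ (q.toReal - 1)) * distFun f t ^ (q.toReal / p.toReal)) ^
        (1 / q.toReal)

/-- Membership in the Lorentz space `L^{p,q}(ℝⁿ)`. -/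
def MemLorentz {n : ℕ} (f : Rn n → ℂ) (p q : ℝ≥0∞) : Prop :=
  AEStronglyMeasurable f volume ∧ lorentzNorm f p q < ∞

/-- A function of weak type `q > 1` integrates over a set `E` to at most a multiple of
`μ E ^ (1 - 1 / q)`. -/
lemma setLIntegral_le_of_weakType {α : Type*} [MeasurableSpace α] {μ : Measure α} {f : α → ℝ}
    {q c : ℝ} (hq : 1 < q) (hc : 0 < c) (f_nonneg : 0 ≤ f) (hf : Measurable f)
    (hd : ∀ t : ℝ, 0 < t → μ {a | t < f a} ≤ ENNReal.ofReal (c * t ^ (-q))) (E : Set α) :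
    ∫⁻ a in E, ENNReal.ofReal (f a) ∂μ ≤
      ENNReal.ofReal (q / (q - 1) * c ^ (1 / q)) * μ E ^ (1 - 1 / q) := by
  have hq0 : 0 < q := by linarith
  have hq1 : 0 < q - 1 := by linarith
  have hqinv : 0 < 1 - 1 / q := by
    rw [sub_pos, div_lt_one hq0]; exact hq
  have hK : 0 < q / (q - 1) * c ^ (1 / q) := by positivity
  rcases eq_or_ne (μ E) 0 with hE0 | hE0
  · rw [setLIntegral_measure_zero _ _ hE0]; exact zero_le
  rcases eq_or_ne (μ E) ∞ with hEtop | hEtop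
  · rw [hEtop, ENNReal.top_rpow_of_pos hqinv, ENNReal.mul_top (by simpa using hK)]
    exact le_top
  set e := (μ E).toReal with he
  have he0 : 0 < e := ENNReal.toReal_pos hE0 hEtop
  have hEe : μ E = ENNReal.ofReal e := (ENNReal.ofReal_toReal hEtop).symm
  set s := (c / e) ^ (1 / q) with hs
  have hs0 : 0 < s := by positivity
  have hsq : s ^ q = c / e := by
    rw [hs, ← Real.rpow_mul (by positivity), one_div_mul_cancel hq0.ne', Real.rpow_one]
  have hse : s * e = c ^ (1 / q) * e ^ (1 - 1 / q) := by
    rw [hs, Real.div_rpow hc.le he0.le, Real.rpow_sub he0, Real.rpow_one]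
    field_simp
  have hnear : ∫⁻ t in Set.Ioc 0 s, (μ.restrict E) {a | t < f a} ≤ ENNReal.ofReal (s * e) := by
    calc ∫⁻ t in Set.Ioc 0 s, (μ.restrict E) {a | t < f a}
        ≤ ∫⁻ _ in Set.Ioc 0 s, μ E :=
          lintegral_mono fun t => (measure_mono (Set.subset_univ _)).trans_eq
            (Measure.restrict_apply_univ E)
      _ = ENNReal.ofReal (s * e) := by
          rw [setLIntegral_const, Real.volume_Ioc, hEe, sub_zero, mul_comm,
            ENNReal.ofReal_mul hs0.le]
  have hfar : ∫⁻ t in Set.Ioi s, (μ.restrict E) {a | t < f a} ≤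
      ENNReal.ofReal (s * e / (q - 1)) := by
    calc ∫⁻ t in Set.Ioi s, (μ.restrict E) {a | t < f a}
        ≤ ∫⁻ t in Set.Ioi s, ENNReal.ofReal (c * t ^ (-q)) :=
          setLIntegral_mono' measurableSet_Ioi fun t ht =>
            (Measure.restrict_apply_le _ _).trans (hd t (hs0.trans ht))
      _ = ENNReal.ofReal (∫ t in Set.Ioi s, c * t ^ (-q)) := by
          refine (ofReal_integral_eq_lintegral_ofReal
            ((integrableOn_Ioi_rpow_of_lt (by linarith) hs0).const_mul c) ?_).symm
          filter_upwards [ae_restrict_mem measurableSet_Ioi] with t ht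
          have : 0 < t := hs0.trans ht
          simp only [Pi.zero_apply]
          positivity
      _ = ENNReal.ofReal (s * e / (q - 1)) := by
          congr 1
          rw [integral_const_mul, integral_Ioi_rpow_of_lt (by linarith) hs0,
            Real.rpow_add hs0, Real.rpow_neg hs0.le, hsq, Real.rpow_one,
            show -q + 1 = -(q - 1) by ring, neg_div_neg_eq]
          field_simp
  rw [lintegral_eq_lintegral_meas_lt _ (Eventually.of_forall f_nonneg) hf.aemeasurable,
    ← Set.Ioc_union_Ioi_eq_Ioi hs0.le,
    lintegral_union measurableSet_Ioi (Set.Ioc_disjoint_Ioi le_rfl)]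
  refine (add_le_add hnear hfar).trans_eq ?_
  rw [← ENNReal.ofReal_add (by positivity) (by positivity), hEe,
    ENNReal.ofReal_rpow_of_pos he0, ← ENNReal.ofReal_mul hK.le, hse]
  congr 1
  field_simp
  ring

/-- Hölder's inequality for the pairing of weak `L^q` with `L^{q',1}`. -/
lemma lintegral_mul_enorm_le_of_weakType {α F : Type*} [MeasurableSpace α] {μ : Measure α}
    [SFinite μ] [NormedAddCommGroup F] {f : α → ℝ} {W : α → F} {q c : ℝ} (hq : 1 < q) (hc : 0 < c)
    (f_nonneg : 0 ≤ f) (hf : Measurable f)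
    (hd : ∀ t : ℝ, 0 < t → μ {a | t < f a} ≤ ENNReal.ofReal (c * t ^ (-q)))
    (hW : AEStronglyMeasurable W μ) :
    ∫⁻ a, ENNReal.ofReal (f a) * ‖W a‖ₑ ∂μ ≤
      ENNReal.ofReal (q / (q - 1) * c ^ (1 / q)) *
        ∫⁻ t in Set.Ioi (0 : ℝ), μ {a | t < ‖W a‖} ^ (1 - 1 / q) := by
  have hmeas : Measurable fun a => ENNReal.ofReal (f a) := hf.ennreal_ofReal
  have habs := withDensity_absolutelyContinuous μ fun a => ENNReal.ofReal (f a)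
  calc ∫⁻ a, ENNReal.ofReal (f a) * ‖W a‖ₑ ∂μ
      = ∫⁻ a, ENNReal.ofReal ‖W a‖ ∂μ.withDensity fun a => ENNReal.ofReal (f a) := by
        simp_rw [ofReal_norm]
        exact (lintegral_withDensity_eq_lintegral_mul₀ hmeas.aemeasurable hW.enorm).symm
    _ = ∫⁻ t in Set.Ioi (0 : ℝ), ∫⁻ a in {a | t < ‖W a‖}, ENNReal.ofReal (f a) ∂μ := by
        rw [lintegral_eq_lintegral_meas_lt _ (Eventually.of_forall fun a => norm_nonneg _)
          (hW.norm.aemeasurable.mono' habs)]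
        simp_rw [withDensity_apply']
    _ ≤ ∫⁻ t in Set.Ioi (0 : ℝ), ENNReal.ofReal (q / (q - 1) * c ^ (1 / q)) *
          μ {a | t < ‖W a‖} ^ (1 - 1 / q) :=
        lintegral_mono fun t => setLIntegral_le_of_weakType hq hc f_nonneg hf hd _
    _ = _ := lintegral_const_mul' _ _ ENNReal.ofReal_ne_top

/-- The superlevel sets of `|x - ·|^{-m}` are contained in balls. -/
lemma volume_lt_inv_norm_sub_pow_le {n m : ℕ} (hn : 0 < n) (hm : 0 < m) (x : Rn n) {t : ℝ}
    (ht : 0 < t) :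
    volume {z : Rn n | t < (‖x - z‖ ^ m)⁻¹} ≤
      ENNReal.ofReal ((volume (Metric.ball (0 : Rn n) 1)).toReal * t ^ (-((n : ℝ) / m))) := by
  have : Nonempty (Fin n) := ⟨⟨0, hn⟩⟩
  have hm' : (0 : ℝ) < m := by exact_mod_cast hm
  set r := t ^ (-(1 / (m : ℝ))) with hr
  have hr0 : 0 < r := by positivity
  have hrm : r ^ m = t⁻¹ := by
    rw [hr, ← Real.rpow_natCast, ← Real.rpow_mul ht.le, neg_mul, one_div_mul_cancel hm'.ne',
      Real.rpow_neg_one]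
  have hrn : r ^ n = t ^ (-((n : ℝ) / m)) := by
    rw [hr, ← Real.rpow_natCast, ← Real.rpow_mul ht.le]
    congr 1
    ring
  have hsub : {z : Rn n | t < (‖x - z‖ ^ m)⁻¹} ⊆ Metric.ball x r := by
    intro z hz
    have hz : t < (‖x - z‖ ^ m)⁻¹ := hz
    rw [Metric.mem_ball, dist_comm, dist_eq_norm]
    refine lt_of_pow_lt_pow_left₀ m hr0.le ?_
    rw [hrm]
    exact (lt_inv_comm₀ ht (inv_pos.1 (ht.trans hz))).1 hz
  refine (measure_mono hsub).trans_eq ?_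
  rw [Measure.addHaar_ball volume x hr0.le, finrank_euclideanSpace_fin, hrn, mul_comm,
    ENNReal.ofReal_mul ENNReal.toReal_nonneg, ENNReal.ofReal_toReal measure_ball_lt_top.ne]

lemma toReal_natCast_div_sub_two (n : ℕ) :
    ((n : ℝ≥0∞) / ((n : ℝ≥0∞) - 2)).toReal = (n : ℝ) / ((n - 2 : ℕ) : ℝ) := by
  have : (n : ℝ≥0∞) - 2 = ((n - 2 : ℕ) : ℝ≥0∞) := by
    rw [ENNReal.natCast_sub]; rfl
  rw [this, ENNReal.toReal_div, ENNReal.toReal_natCast, ENNReal.toReal_natCast]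

/-- The weak norm of `|v|^{-(n-2)}` dominates the corresponding power of the volume of the unit
ball. -/
lemma ofReal_volume_ball_rpow_le_lorentzNorm {n : ℕ} (hn : 3 ≤ n) :
    ENNReal.ofReal ((volume (Metric.ball (0 : Rn n) 1)).toReal ^
        (1 / ((n : ℝ) / ((n - 2 : ℕ) : ℝ)))) ≤
      lorentzNorm (fun v : Rn n => (((‖v‖ ^ (n - 2))⁻¹ : ℝ) : ℂ))
        ((n : ℝ≥0∞) / ((n : ℝ≥0∞) - 2)) ∞ := by
  have : Nonempty (Fin n) := ⟨⟨0, by omega⟩⟩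
  have hp : (n : ℝ≥0∞) / ((n : ℝ≥0∞) - 2) ≠ ∞ := by
    refine ENNReal.div_ne_top (ENNReal.natCast_ne_top n) ?_
    rw [Ne, tsub_eq_zero_iff_le, not_le]
    exact_mod_cast (by omega : 2 < n)
  rw [lorentzNorm, if_pos rfl, if_neg hp, toReal_natCast_div_sub_two]
  refine le_trans ?_ (le_iSup₂ (1 : ℝ) one_pos)
  rw [ENNReal.ofReal_one, one_mul,
    ← ENNReal.ofReal_rpow_of_nonneg ENNReal.toReal_nonneg (by positivity),
    ENNReal.ofReal_toReal measure_ball_lt_top.ne]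
  refine ENNReal.rpow_le_rpow ?_ (by positivity)
  rw [← measure_sdiff_null (measure_singleton (0 : Rn n)), distFun]
  refine measure_mono fun v hv => ?_
  have hv0 : 0 < ‖v‖ := norm_pos_iff.2 hv.2
  have hv1 : ‖v‖ < 1 := mem_ball_zero_iff.1 hv.1
  have : 1 < (‖v‖ ^ (n - 2))⁻¹ :=
    (one_lt_inv₀ (by positivity)).2 (pow_lt_one₀ hv0.le hv1 (by omega))
  rw [Set.mem_ofPred_eq, Complex.norm_real]
  exact this.trans_le (le_abs_self _)

lemma lorentzNorm_half_one {n : ℕ} (W : Rn n → ℂ) :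
    lorentzNorm W ((n : ℝ≥0∞) / 2) 1 =
      (n : ℝ≥0∞) / 2 * ∫⁻ t in Set.Ioi (0 : ℝ), volume {a | t < ‖W a‖} ^ (2 / (n : ℝ)) := by
  simp [lorentzNorm, distFun]

/-- Convolution of `|·|^{-(n-2)}` with a function in `L^{n/2,1}` is bounded. -/
lemma lintegral_inv_norm_sub_pow_mul_enorm_le {n : ℕ} (hn : 3 ≤ n) {W : Rn n → ℂ}
    (hW : AEStronglyMeasurable W volume) (x : Rn n) :
    ∫⁻ z, ENNReal.ofReal ((‖x - z‖ ^ (n - 2))⁻¹) * ‖W z‖ₑ ≤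
      lorentzNorm (fun v : Rn n => (((‖v‖ ^ (n - 2))⁻¹ : ℝ) : ℂ))
          ((n : ℝ≥0∞) / ((n : ℝ≥0∞) - 2)) ∞ * lorentzNorm W ((n : ℝ≥0∞) / 2) 1 := by
  have : Nonempty (Fin n) := ⟨⟨0, by omega⟩⟩
  have hm : (0 : ℝ) < ((n - 2 : ℕ) : ℝ) := by exact_mod_cast (by omega : 0 < n - 2)
  have hcast : ((n - 2 : ℕ) : ℝ) = n - 2 := by rw [Nat.cast_sub (by omega)]; norm_num
  have hn0 : (0 : ℝ) < n := by linarith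
  have hq : 1 < (n : ℝ) / ((n - 2 : ℕ) : ℝ) := by rw [one_lt_div hm]; linarith
  have hc : 0 < (volume (Metric.ball (0 : Rn n) 1)).toReal :=
    ENNReal.toReal_pos (Metric.measure_ball_pos _ _ one_pos).ne' measure_ball_lt_top.ne
  have hexp : 1 - 1 / ((n : ℝ) / ((n - 2 : ℕ) : ℝ)) = 2 / n := by
    rw [hcast]; field_simp; ring
  have hconst : (n : ℝ) / ((n - 2 : ℕ) : ℝ) / ((n : ℝ) / ((n - 2 : ℕ) : ℝ) - 1) = n / 2 := by
    rw [hcast] at hm ⊢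
    have : (n : ℝ) - 2 ≠ 0 := hm.ne'
    have h2 : (n : ℝ) / (n - 2) - 1 = 2 / (n - 2) := by field_simp; ring
    rw [h2]
    field_simp
  have h := lintegral_mul_enorm_le_of_weakType (μ := (volume : Measure (Rn n)))
    (f := fun z : Rn n => (‖x - z‖ ^ (n - 2))⁻¹) hq hc
    (fun z => by simp only [Pi.zero_apply]; positivity) (by fun_prop)
    (fun t ht => volume_lt_inv_norm_sub_pow_le (by omega) (by omega) x ht) hW
  rw [hexp, hconst, ENNReal.ofReal_mul (by positivity), ENNReal.ofReal_div_of_pos two_pos,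
    ENNReal.ofReal_natCast, ENNReal.ofReal_ofNat] at h
  rw [lorentzNorm_half_one, ← mul_assoc]
  refine h.trans ?_
  rw [mul_comm (n / 2 : ℝ≥0∞)]
  gcongr
  exact ofReal_volume_ball_rpow_le_lorentzNorm hn

/-- A product of two inverse powers of distances is controlled by their sum. -/
lemma inv_norm_pow_mul_inv_norm_pow_le {F : Type*} [NormedAddCommGroup F] (m : ℕ) {x y : F}
    (hxy : x ≠ y) (z : F) :
    (‖x - z‖ ^ m)⁻¹ * (‖z - y‖ ^ m)⁻¹ ≤
      2 ^ m / ‖x - y‖ ^ m * ((‖x - z‖ ^ m)⁻¹ + (‖z - y‖ ^ m)⁻¹) := by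
  have hd : 0 < ‖x - y‖ := norm_pos_iff.2 (sub_ne_zero.2 hxy)
  have htri : ‖x - y‖ ≤ ‖x - z‖ + ‖z - y‖ := norm_sub_le_norm_sub_add_norm_sub x z y
  have key : ∀ r : ℝ, ‖x - y‖ / 2 ≤ r → (r ^ m)⁻¹ ≤ 2 ^ m / ‖x - y‖ ^ m := by
    intro r hr
    have hr0 : 0 < r := (half_pos hd).trans_le hr
    rw [← div_pow, ← inv_pow, ← inv_div]
    gcongr
  rw [mul_add]
  rcases le_total ‖x - z‖ ‖z - y‖ with h | h
  · have := mul_le_mul_of_nonneg_left (key ‖z - y‖ (by linarith))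
      (by positivity : 0 ≤ (‖x - z‖ ^ m)⁻¹)
    have : 0 ≤ 2 ^ m / ‖x - y‖ ^ m * (‖z - y‖ ^ m)⁻¹ := by positivity
    linarith
  · have := mul_le_mul_of_nonneg_right (key ‖x - z‖ (by linarith))
      (by positivity : 0 ≤ (‖z - y‖ ^ m)⁻¹)
    have : 0 ≤ 2 ^ m / ‖x - y‖ ^ m * (‖x - z‖ ^ m)⁻¹ := by positivity
    linarith

/-- For `n ≥ 3`, `W ∈ L^{n/2,1}(ℝⁿ)` and `x ≠ y`,
`∫ |x-z|^{-(n-2)} |W(z)| |z-y|^{-(n-2)} dz ≤ ‖a‖_{n/(n-2),∞} ‖W‖_{n/2,1} · 2^{n-1}/|x-y|^{n-2}`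
where `a(x) = |x|^{-(n-2)}`. -/
theorem kernel_convolution_bound
    (n : ℕ) (hn : 3 ≤ n) (W : Rn n → ℂ)
    (hW : MemLorentz W ((n : ℝ≥0∞) / 2) 1)
    (x y : Rn n) (hxy : x ≠ y) :
    (∫⁻ z : Rn n,
        ENNReal.ofReal ((‖x - z‖ ^ (n - 2))⁻¹) * (‖W z‖₊ : ℝ≥0∞) *
          ENNReal.ofReal ((‖z - y‖ ^ (n - 2))⁻¹)) ≤
      lorentzNorm (fun v : Rn n => (((‖v‖ ^ (n - 2))⁻¹ : ℝ) : ℂ))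
          ((n : ℝ≥0∞) / ((n : ℝ≥0∞) - 2)) ∞ *
        lorentzNorm W ((n : ℝ≥0∞) / 2) 1 *
        ENNReal.ofReal (2 ^ (n - 1) / ‖x - y‖ ^ (n - 2)) := by
  have hm : n - 1 = (n - 2) + 1 := by omega
  set K := 2 ^ (n - 2) / ‖x - y‖ ^ (n - 2) with hK
  have hK0 : 0 ≤ K := by positivity
  have hpoint : ∀ z, ENNReal.ofReal ((‖x - z‖ ^ (n - 2))⁻¹) * (‖W z‖₊ : ℝ≥0∞) *
      ENNReal.ofReal ((‖z - y‖ ^ (n - 2))⁻¹) ≤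
      ENNReal.ofReal K * (ENNReal.ofReal ((‖x - z‖ ^ (n - 2))⁻¹) * ‖W z‖ₑ +
        ENNReal.ofReal ((‖y - z‖ ^ (n - 2))⁻¹) * ‖W z‖ₑ) := by
    intro z
    rw [norm_sub_rev y z, ← add_mul, ← ENNReal.ofReal_add (by positivity) (by positivity),
      ← mul_assoc, ← ENNReal.ofReal_mul hK0, mul_right_comm,
      ← ENNReal.ofReal_mul (by positivity), enorm_eq_nnnorm]
    exact mul_le_mul_left
      (ENNReal.ofReal_le_ofReal (inv_norm_pow_mul_inv_norm_pow_le _ hxy z)) _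
  refine (lintegral_mono hpoint).trans ?_
  rw [lintegral_const_mul' _ _ ENNReal.ofReal_ne_top, lintegral_add_left' (by
    exact AEMeasurable.mul (by fun_prop) hW.1.enorm)]
  refine (mul_le_mul_right (add_le_add (lintegral_inv_norm_sub_pow_mul_enorm_le hn hW.1 x)
    (lintegral_inv_norm_sub_pow_mul_enorm_le hn hW.1 y)) _).trans_eq ?_
  rw [hm, pow_succ, mul_div_right_comm, ← hK, ENNReal.ofReal_mul hK0, ENNReal.ofReal_ofNat]
  ring
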